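/- arXiv:1304.1598 — 7 statements merged into one kernel-verified Lean document; each statement's English description precedes it below -/
import Mathlib

section
/- Let X be a real random variable on a probability space with E[X^2] = σ² < ∞ for some σ > 0, and let X̄ be an independent copy of X (i.e. X̄ is independent of X and has the same distribution as X). If for all a, b > 0 the random variable aX + bX̄ has the same distribution as √(a² + b²)·X, then X has the centered Gaussian distribution N(0, σ²), i.e. the law of X is the Gaussian measure on ℝ with mean 0 and variance σ². -/
open MeasureTheory ProbabilityTheory

/-- If `E[X^2] = σ² < ∞`, `X̄` is an independent copy of `X`, and
`a X + b X̄ =_d √(a² + b²) X` for all `a, b > 0`, then `X ~ N(0, σ²)`. -/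
theorem random_limit_normal_stmt0
    {Ω : Type*} [MeasurableSpace Ω] (P : Measure Ω) [IsProbabilityMeasure P]
    (X Xbar : Ω → ℝ) (hX : Measurable X) (hXbar : Measurable Xbar)
    (σ : ℝ) (hσ : 0 < σ)
    (hint : Integrable (fun ω => (X ω) ^ 2) P)
    (hvar : ∫ ω, (X ω) ^ 2 ∂P = σ ^ 2)
    (hindep : IndepFun X Xbar P)
    (hsame : Measure.map Xbar P = Measure.map X P)
    (hstable : ∀ a b : ℝ, 0 < a → 0 < b →
      Measure.map (fun ω => a * X ω + b * Xbar ω) P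
        = Measure.map (fun ω => Real.sqrt (a ^ 2 + b ^ 2) * X ω) P) :
    Measure.map X P = gaussianReal 0 (Real.toNNReal (σ ^ 2)) := by
  -- integrability of X and the mean
  have hmem : MemLp X 2 P := (memLp_two_iff_integrable_sq hX.aestronglyMeasurable).2 hint
  have hXi : Integrable X P := hmem.integrable (by norm_num)
  have hid : IdentDistrib Xbar X P P := ⟨hXbar.aemeasurable, hX.aemeasurable, hsame⟩
  have hXbi : Integrable Xbar P := hid.integrable_iff.2 hXi
  have hmean : ∫ ω, X ω ∂P = 0 := by
    have h11 : IdentDistrib (fun ω => 1 * X ω + 1 * Xbar ω)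
        (fun ω => Real.sqrt (1 ^ 2 + 1 ^ 2) * X ω) P P :=
      ⟨by fun_prop, by fun_prop, hstable 1 1 one_pos one_pos⟩
    have h := h11.integral_eq
    rw [integral_add (hXi.const_mul 1) (hXbi.const_mul 1), integral_const_mul,
      integral_const_mul, integral_const_mul, hid.integral_eq] at h
    have h2 : Real.sqrt (1 ^ 2 + 1 ^ 2) < 2 := by
      rw [Real.sqrt_lt' (by norm_num)]; norm_num
    have h3 : (2 - Real.sqrt (1 ^ 2 + 1 ^ 2)) * ∫ ω, X ω ∂P = 0 := by linarith
    rcases mul_eq_zero.1 h3 with h4 | h4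
    · linarith
    · exact h4
  -- functional equation of the characteristic function
  set φ : ℝ → ℂ := charFun (P.map X) with hφ
  have hfun : ∀ a b t : ℝ, 0 < a → 0 < b →
      φ (Real.sqrt (a ^ 2 + b ^ 2) * t) = φ (a * t) * φ (b * t) := by
    intro a b t ha hb
    have hi : IndepFun (fun ω => a * X ω) (fun ω => b * Xbar ω) P :=
      hindep.comp (measurable_const_mul a) (measurable_const_mul b)
    have h := congrArg (fun μ => charFun μ t) (hstable a b ha hb)
    rw [hi.charFun_map_fun_add_eq_mul (by fun_prop) (by fun_prop), Pi.mul_apply,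
      charFun_map_mul_comp hX.aemeasurable, charFun_map_mul_comp hX.aemeasurable,
      charFun_map_mul_comp hXbar.aemeasurable, hsame] at h
    exact h.symm
  have hpow : ∀ n : ℕ, ∀ t : ℝ, φ (Real.sqrt ((n + 1 : ℕ) : ℝ) * t) = φ t ^ (n + 1) := by
    intro n
    induction n with
    | zero => intro t; simp
    | succ k ih =>
      intro t
      have h := hfun (Real.sqrt ((k + 1 : ℕ) : ℝ)) 1 t (Real.sqrt_pos.2 (by positivity)) one_pos
      rw [Real.sq_sqrt (by positivity), ih t, one_mul] at h
      rw [pow_succ, ← h]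
      push_cast
      norm_num
  -- the normalised variable and the limit
  have key : ∀ t : ℝ, φ t = Complex.exp (-((σ * t : ℝ) : ℂ) ^ 2 / 2) := by
    intro t
    have hlim := tendsto_charFun_inv_sqrt_mul_pow (P := P) (X := fun ω => σ⁻¹ * X ω)
      (by fun_prop) (by rw [integral_const_mul, hmean, mul_zero])
      (by
        have : ((fun ω => σ⁻¹ * X ω) ^ 2) = fun ω => (σ⁻¹) ^ 2 * (X ω) ^ 2 := by
          ext ω; simp [mul_pow]
        rw [this, integral_const_mul, hvar]
        field_simp) (σ * t)
    refine tendsto_nhds_unique (Filter.Tendsto.congr' ?_ tendsto_const_nhds) hlim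
    filter_upwards [Filter.eventually_ge_atTop 1] with n hn
    obtain ⟨m, rfl⟩ : ∃ m, n = m + 1 := ⟨n - 1, by omega⟩
    rw [charFun_map_mul_comp hX.aemeasurable]
    change φ t = φ _ ^ (m + 1)
    rw [← hpow]
    congr 1
    have : Real.sqrt ((m + 1 : ℕ) : ℝ) ≠ 0 := (Real.sqrt_pos.2 (by positivity)).ne'
    field_simp
  have : IsProbabilityMeasure (P.map X) := Measure.isProbabilityMeasure_map hX.aemeasurable
  refine Measure.ext_of_charFun ?_
  ext t
  change φ t = _
  rw [key t, charFun_gaussianReal, Real.coe_toNNReal _ (sq_nonneg σ)]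
  congr 1
  push_cast
  ring
end

section
/- (Theorem 2.3, case 1, monotonicity.) Let σ > 0 and let h : ℝ → (0, ∞) be continuous, monotone nondecreasing on (−∞, 0) and monotone nonincreasing on [0, ∞). Define the random limit normal function F(y) = G(y, σ·h(y)) = (1/√(2π(σh(y))²)) ∫_{−∞}^{y} exp(−x²/(2(σh(y))²)) dx. Then F is monotone nondecreasing on all of ℝ. -/
/-- The CDF at `y` of a centered normal distribution with standard deviation `s`. -/
noncomputable def gaussCDF (y s : ℝ) : ℝ :=
  (Real.sqrt (2 * Real.pi * s ^ 2))⁻¹ * ∫ x in Set.Iic y, Real.exp (-x ^ 2 / (2 * s ^ 2))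

open Pointwise in
theorem gaussCDF_scale (y s : ℝ) (hs : 0 < s) :
    gaussCDF y s = (Real.sqrt (2 * Real.pi))⁻¹ *
      ∫ x in Set.Iic (y / s), Real.exp (-(1 / 2) * x ^ 2) := by
  have key := MeasureTheory.Measure.setIntegral_comp_smul_of_pos
    (μ := MeasureTheory.volume) (fun x : ℝ => Real.exp (-x ^ 2 / (2 * s ^ 2)))
    (Set.Iic (y / s)) hs
  have hset : s • Set.Iic (y / s) = Set.Iic y := by
    ext x
    rw [Set.mem_smul_set_iff_inv_smul_mem₀ hs.ne', Set.mem_Iic, Set.mem_Iic, smul_eq_mul,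
      inv_mul_eq_div, div_le_div_iff_of_pos_right hs]
  rw [hset] at key
  have hfun : (fun x : ℝ => Real.exp (-(s * x) ^ 2 / (2 * s ^ 2)))
      = fun x => Real.exp (-(1 / 2) * x ^ 2) := by
    funext x
    congr 1
    field_simp
  simp only [Module.finrank_self, pow_one, smul_eq_mul] at key
  rw [hfun] at key
  rw [key, gaussCDF, Real.sqrt_mul (by positivity), Real.sqrt_sq hs.le, mul_inv, mul_assoc]

/-- Theorem 2.3, case 1, monotonicity: if `h` is positive, continuous, nondecreasing on
`(-∞, 0)` and nonincreasing on `[0, ∞)`, then the random limit normal function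
`F(y) = G(y, σ h(y))` is monotone nondecreasing on ℝ. -/
theorem random_limit_normal_stmt5
    (σ : ℝ) (hσ : 0 < σ) (h : ℝ → ℝ) (hpos : ∀ y, 0 < h y) (hcont : Continuous h)
    (hmono : MonotoneOn h (Set.Iio 0)) (hanti : AntitoneOn h (Set.Ici 0))
    (F : ℝ → ℝ) (hF : ∀ y, F y = gaussCDF y (σ * h y)) :
    Monotone F := by
  intro a b hab
  have ha : 0 < σ * h a := mul_pos hσ (hpos a)
  have hb : 0 < σ * h b := mul_pos hσ (hpos b)
  have hle : a / (σ * h a) ≤ b / (σ * h b) := by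
    rcases lt_or_ge b 0 with hb0 | hb0
    · have ha0 : a < 0 := lt_of_le_of_lt hab hb0
      have hh : σ * h a ≤ σ * h b := mul_le_mul_of_nonneg_left (hmono ha0 hb0 hab) hσ.le
      rw [div_le_div_iff₀ ha hb]
      nlinarith
    · rcases lt_or_ge a 0 with ha0 | ha0
      · exact (div_neg_of_neg_of_pos ha0 ha).le.trans (div_nonneg hb0 hb.le)
      · have hh : σ * h b ≤ σ * h a := mul_le_mul_of_nonneg_left (hanti ha0 hb0 hab) hσ.le
        exact div_le_div₀ hb0 hab hb hh
  rw [hF, hF, gaussCDF_scale _ _ ha, gaussCDF_scale _ _ hb]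
  refine mul_le_mul_of_nonneg_left ?_ (by positivity)
  refine MeasureTheory.setIntegral_mono_set
    (integrable_exp_neg_mul_sq (by norm_num)).integrableOn
    (Filter.Eventually.of_forall fun x => (Real.exp_pos _).le)
    (Set.Iic_subset_Iic.2 hle).eventuallyLE
end

section
/- (Theorem 2.3, case 1, limit at +∞.) Let σ > 0 and let h : ℝ → (0, ∞) be continuous, monotone nondecreasing on (−∞, 0) and monotone nonincreasing on [0, ∞). Define F(y) = G(y, σ·h(y)). Then F(y) → 1 as y → +∞. -/
lemma gaussCDF_scale_s6 (y s : ℝ) (hs : 0 < s) : gaussCDF y s = gaussCDF (y / s) 1 := by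
  unfold gaussCDF
  rw [← MeasureTheory.integral_indicator measurableSet_Iic,
    ← MeasureTheory.integral_indicator measurableSet_Iic]
  have key := MeasureTheory.Measure.integral_comp_mul_left
    (fun x => (Set.Iic y).indicator (fun x => Real.exp (-x ^ 2 / (2 * s ^ 2))) x) s
  have e : (fun x => (Set.Iic y).indicator (fun x => Real.exp (-x ^ 2 / (2 * s ^ 2))) (s * x))
      = (Set.Iic (y / s)).indicator (fun x => Real.exp (-x ^ 2 / (2 * 1 ^ 2))) := by
    funext x
    have hiff : s * x ≤ y ↔ x ≤ y / s := by rw [le_div_iff₀ hs, mul_comm]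
    simp only [Set.indicator, Set.mem_Iic, hiff]
    congr 2
    field_simp
  rw [e] at key
  rw [key, abs_of_pos (inv_pos.2 hs), Real.sqrt_mul (by positivity), Real.sqrt_sq hs.le,
    smul_eq_mul]
  simp only [one_pow, mul_one]
  rw [mul_inv, mul_assoc]

lemma gaussCDF_one_tendsto :
    Filter.Tendsto (fun z => gaussCDF z 1) Filter.atTop (nhds 1) := by
  have hi := ProbabilityTheory.integrable_gaussianPDFReal 0 1
  have h1 := ProbabilityTheory.integral_gaussianPDFReal_eq_one 0 (v := 1) one_ne_zero
  have ht := (MeasureTheory.aecover_Iic (μ := MeasureTheory.volume)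
    (Filter.tendsto_id (α := ℝ) (x := Filter.atTop))).integral_tendsto_of_countably_generated hi
  rw [h1] at ht
  refine ht.congr fun z => ?_
  simp [gaussCDF, ProbabilityTheory.gaussianPDFReal, MeasureTheory.integral_const_mul]

/-- Theorem 2.3, case 1, limit at `+∞`: if `h` is positive, continuous, nondecreasing on
`(-∞, 0)` and nonincreasing on `[0, ∞)`, then the random limit normal function
`F(y) = G(y, σ h(y))` tends to `1` as `y → +∞`. -/
theorem random_limit_normal_stmt6
    (σ : ℝ) (hσ : 0 < σ) (h : ℝ → ℝ) (hpos : ∀ y, 0 < h y) (hcont : Continuous h)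
    (hmono : MonotoneOn h (Set.Iio 0)) (hanti : AntitoneOn h (Set.Ici 0))
    (F : ℝ → ℝ) (hF : ∀ y, F y = gaussCDF y (σ * h y)) :
    Filter.Tendsto F Filter.atTop (nhds 1) := by
  have hlim : Filter.Tendsto (fun y => y / (σ * h y)) Filter.atTop Filter.atTop := by
    have h0 : 0 < σ * h 0 := mul_pos hσ (hpos 0)
    refine Filter.tendsto_atTop_mono' _ ?_ (Filter.tendsto_id.atTop_div_const h0)
    filter_upwards [Filter.eventually_ge_atTop 0] with y hy
    have hle : h y ≤ h 0 := hanti (Set.mem_Ici.2 le_rfl) (Set.mem_Ici.2 hy) hy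
    exact div_le_div_of_nonneg_left hy (mul_pos hσ (hpos y))
      (mul_le_mul_of_nonneg_left hle hσ.le)
  refine (gaussCDF_one_tendsto.comp hlim).congr fun y => ?_
  rw [hF, gaussCDF_scale_s6 y _ (mul_pos hσ (hpos y))]
  rfl
end

section
/- (Theorem 2.3, case 1, limit at −∞.) Let σ > 0 and let h : ℝ → (0, ∞) be continuous, monotone nondecreasing on (−∞, 0) and monotone nonincreasing on [0, ∞). Define F(y) = G(y, σ·h(y)). Then F(y) → 0 as y → −∞. -/
lemma gaussCDF_nonneg (y s : ℝ) : 0 ≤ gaussCDF y s := by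
  unfold gaussCDF
  have : 0 ≤ ∫ x in Set.Iic y, Real.exp (-x ^ 2 / (2 * s ^ 2)) :=
    MeasureTheory.integral_nonneg (fun x => (Real.exp_pos _).le)
  positivity

lemma gaussCDF_le (y s : ℝ) (hy : y < 0) (hs : 0 < s) : gaussCDF y s ≤ 2 * s / (-y) := by
  unfold gaussCDF
  have hc : 0 < -y / (2 * s ^ 2) := div_pos (by linarith) (by positivity)
  have h1 : ∫ x in Set.Iic y, Real.exp (-x ^ 2 / (2 * s ^ 2)) ≤ 2 * s ^ 2 / (-y) := by
    calc ∫ x in Set.Iic y, Real.exp (-x ^ 2 / (2 * s ^ 2))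
        ≤ ∫ x in Set.Iic y, Real.exp (-y / (2 * s ^ 2) * x) := by
          apply MeasureTheory.integral_mono_of_nonneg
          · exact Filter.Eventually.of_forall fun x => (Real.exp_pos _).le
          · exact integrableOn_exp_mul_Iic hc y
          · refine (MeasureTheory.ae_restrict_iff' measurableSet_Iic).2
              (Filter.Eventually.of_forall fun x hx => ?_)
            have hx' : x ≤ y := hx
            apply Real.exp_le_exp.2
            rw [div_mul_eq_mul_div]
            apply div_le_div_of_nonneg_right _ (by positivity)
            nlinarith
      _ = Real.exp (-y / (2 * s ^ 2) * y) / (-y / (2 * s ^ 2)) := integral_exp_mul_Iic hc y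
      _ ≤ 1 / (-y / (2 * s ^ 2)) := by
          apply div_le_div_of_nonneg_right _ hc.le
          apply Real.exp_le_one_iff.2
          nlinarith
      _ = 2 * s ^ 2 / (-y) := one_div_div _ _
  have h2 : s ≤ Real.sqrt (2 * Real.pi * s ^ 2) := by
    apply Real.le_sqrt_of_sq_le
    nlinarith [Real.pi_gt_three, sq_nonneg s]
  have h3 : (Real.sqrt (2 * Real.pi * s ^ 2))⁻¹ ≤ s⁻¹ := inv_anti₀ hs h2
  have h4 : 0 ≤ 2 * s ^ 2 / (-y) := div_nonneg (by positivity) (by linarith)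
  calc _ ≤ (Real.sqrt (2 * Real.pi * s ^ 2))⁻¹ * (2 * s ^ 2 / (-y)) :=
        mul_le_mul_of_nonneg_left h1 (by positivity)
    _ ≤ s⁻¹ * (2 * s ^ 2 / (-y)) := mul_le_mul_of_nonneg_right h3 h4
    _ = 2 * s / (-y) := by
        have := hs.ne'
        have := hy.ne
        field_simp

/-- Theorem 2.3, case 1, limit at `-∞`: if `h` is positive, continuous, nondecreasing on
`(-∞, 0)` and nonincreasing on `[0, ∞)`, then the random limit normal function
`F(y) = G(y, σ h(y))` tends to `0` as `y → -∞`. -/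
theorem random_limit_normal_stmt7
    (σ : ℝ) (hσ : 0 < σ) (h : ℝ → ℝ) (hpos : ∀ y, 0 < h y) (hcont : Continuous h)
    (hmono : MonotoneOn h (Set.Iio 0)) (hanti : AntitoneOn h (Set.Ici 0))
    (F : ℝ → ℝ) (hF : ∀ y, F y = gaussCDF y (σ * h y)) :
    Filter.Tendsto F Filter.atBot (nhds 0) := by
  have hlim : Filter.Tendsto (fun y : ℝ => 2 * (σ * h (-1)) / (-y)) Filter.atBot (nhds 0) :=
    Filter.Tendsto.const_div_atTop Filter.tendsto_neg_atBot_atTop _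
  refine tendsto_of_tendsto_of_tendsto_of_le_of_le' tendsto_const_nhds hlim
    (Filter.Eventually.of_forall fun y => by rw [hF]; exact gaussCDF_nonneg _ _) ?_
  filter_upwards [Filter.eventually_le_atBot (-1 : ℝ)] with y hy
  rw [hF]
  refine (gaussCDF_le y _ (by linarith) (mul_pos hσ (hpos y))).trans ?_
  apply div_le_div_of_nonneg_right _ (by linarith)
  have hm : h y ≤ h (-1) :=
    hmono (show y < 0 by linarith) (show (-1 : ℝ) < 0 by norm_num) hy
  have := mul_le_mul_of_nonneg_left hm hσ.le
  linarith
end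

section
/- Let K < 0 and define g̃(m) = exp(−m²/2) + K·∫_{−∞}^{m} exp(−z²/2)·(z² − 1) dz for m ∈ ℝ. Then g̃ is differentiable with derivative g̃′(m) = exp(−m²/2)·(K·m² − m − K), and g̃ is strictly increasing on the interval (1/K, 0]. -/
/-- For `K < 0`, the function `g̃(m) = exp(-m²/2) + K ∫_{-∞}^m exp(-z²/2)(z² - 1) dz`
is differentiable with derivative `exp(-m²/2) (K m² - m - K)`, and is strictly
increasing on `(1/K, 0]`. -/
theorem random_limit_normal_stmt12 (K : ℝ) (hK : K < 0)
    (g : ℝ → ℝ)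
    (hg : ∀ m, g m = Real.exp (-m ^ 2 / 2)
      + K * ∫ z in Set.Iic m, Real.exp (-z ^ 2 / 2) * (z ^ 2 - 1)) :
    (∀ m, HasDerivAt g (Real.exp (-m ^ 2 / 2) * (K * m ^ 2 - m - K)) m) ∧
    StrictMonoOn g (Set.Ioc (1 / K) 0) := by
  have hint : MeasureTheory.Integrable
      (fun z : ℝ => Real.exp (-z ^ 2 / 2) * (z ^ 2 - 1)) := by
    have h0 := integrable_exp_neg_mul_sq (b := 1 / 2) (by norm_num)
    have h2 := integrable_rpow_mul_exp_neg_mul_sq (b := 1 / 2) (by norm_num)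
      (s := 2) (by norm_num)
    refine (h2.sub h0).congr (Filter.Eventually.of_forall fun z => ?_)
    have e : -(1 / 2 : ℝ) * z ^ 2 = -z ^ 2 / 2 := by ring
    simp only [Pi.sub_apply, Real.rpow_two, e]
    ring
  have hcont : Continuous (fun z : ℝ => Real.exp (-z ^ 2 / 2) * (z ^ 2 - 1)) := by
    fun_prop
  have hd : ∀ m, HasDerivAt g (Real.exp (-m ^ 2 / 2) * (K * m ^ 2 - m - K)) m := by
    intro m
    have hgeq : g = fun m => Real.exp (-m ^ 2 / 2)
        + K * ((∫ z in (0 : ℝ)..m, Real.exp (-z ^ 2 / 2) * (z ^ 2 - 1))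
          + ∫ z in Set.Iic 0, Real.exp (-z ^ 2 / 2) * (z ^ 2 - 1)) := by
      funext x
      rw [hg x, ← intervalIntegral.integral_Iic_sub_Iic hint.integrableOn hint.integrableOn]
      ring
    have h1 : HasDerivAt (fun m : ℝ => Real.exp (-m ^ 2 / 2))
        (Real.exp (-m ^ 2 / 2) * (-m)) m := by
      have h := ((hasDerivAt_pow 2 m).fun_neg.div_const 2).exp
      refine h.congr_deriv ?_
      norm_num
      ring
    have h2 := (hcont.integral_hasStrictDerivAt 0 m).hasDerivAt
    rw [hgeq]
    refine (h1.fun_add ((h2.add_const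
      (∫ z in Set.Iic 0, Real.exp (-z ^ 2 / 2) * (z ^ 2 - 1))).const_mul K)).congr_deriv ?_
    ring
  refine ⟨hd, ?_⟩
  apply strictMonoOn_of_deriv_pos (convex_Ioc _ _)
  · exact fun x _ => (hd x).continuousAt.continuousWithinAt
  · intro x hx
    obtain ⟨h1, h2⟩ := interior_subset hx
    rw [(hd x).deriv]
    apply mul_pos (Real.exp_pos _)
    rw [div_lt_iff_of_neg hK] at h1
    nlinarith
end

section
/- Let σ > 0, c > 0 and K < 0, and define F(y) = G(y, σ·(Ky + c)) for y ≤ 0. Then F is differentiable on (−∞, 0) and its derivative F′(y) tends to 0 as y → −∞. -/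
/-- Standard (unnormalized) Gaussian integral. -/
noncomputable def gaussPhi (u : ℝ) : ℝ := ∫ x in Set.Iic u, Real.exp (-(1/2) * x ^ 2)

lemma gaussPhi_hasDerivAt (u : ℝ) : HasDerivAt gaussPhi (Real.exp (-(1/2) * u ^ 2)) u := by
  have hint : MeasureTheory.Integrable (fun x : ℝ => Real.exp (-(1/2) * x ^ 2)) :=
    integrable_exp_neg_mul_sq (by norm_num)
  have hcont : Continuous (fun x : ℝ => Real.exp (-(1/2) * x ^ 2)) := by fun_prop
  have heq : gaussPhi = fun v => (∫ x in (0:ℝ)..v, Real.exp (-(1/2) * x ^ 2)) + gaussPhi 0 := by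
    funext v
    have := intervalIntegral.integral_Iic_sub_Iic (μ := MeasureTheory.volume)
      (hint.integrableOn (s := Set.Iic 0)) (hint.integrableOn (s := Set.Iic v))
    simp only [gaussPhi]
    linarith
  rw [heq]
  exact (intervalIntegral.integral_hasDerivAt_right (hcont.intervalIntegrable _ _)
    hcont.aestronglyMeasurable.stronglyMeasurableAtFilter hcont.continuousAt).add_const _

lemma gaussCDF_eq_gaussPhi (y s : ℝ) (hs : 0 < s) :
    gaussCDF y s = (Real.sqrt (2 * Real.pi))⁻¹ * gaussPhi (y / s) := by
  have h1 : (∫ x in Set.Iic y, Real.exp (-x ^ 2 / (2 * s ^ 2))) = s * gaussPhi (y / s) := by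
    have h := MeasureTheory.integral_comp_mul_left_Ioi
      (fun x : ℝ => Real.exp (-(1/2) * x ^ 2)) (-y) (b := s⁻¹) (by positivity)
    have e1 := integral_comp_neg_Iic y (fun x : ℝ => Real.exp (-(1/2) * (s⁻¹ * x) ^ 2))
    have e2 := integral_comp_neg_Iic (y / s) (fun x : ℝ => Real.exp (-(1/2) * x ^ 2))
    have e3 : s⁻¹ * -y = -(y / s) := by ring
    rw [e3, ← e2, ← e1] at h
    simp only [neg_sq, mul_neg, inv_inv, smul_eq_mul] at h
    rw [gaussPhi, ← h]
    congr 1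
    funext x
    congr 1
    field_simp
  rw [gaussCDF, h1, Real.sqrt_mul (by positivity), Real.sqrt_sq hs.le]
  field_simp

/-- For `σ > 0`, `c > 0`, `K < 0`, the function `F(y) = G(y, σ (K y + c))` is
differentiable on `(-∞, 0)` and its derivative tends to `0` as `y → -∞`. -/
theorem random_limit_normal_stmt13
    (σ c K : ℝ) (hσ : 0 < σ) (hc : 0 < c) (hK : K < 0)
    (F : ℝ → ℝ) (hF : ∀ y ≤ 0, F y = gaussCDF y (σ * (K * y + c))) :
    DifferentiableOn ℝ F (Set.Iio 0) ∧
    Filter.Tendsto (deriv F) Filter.atBot (nhds 0) := by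
  have hpos : ∀ y < 0, 0 < σ * (K * y + c) := fun y hy =>
    mul_pos hσ (add_pos (mul_pos_of_neg_of_neg hK hy) hc)
  have hd : ∀ y < 0, HasDerivAt F ((Real.sqrt (2 * Real.pi))⁻¹ *
      (Real.exp (-(1/2) * (y / (σ * (K * y + c))) ^ 2) *
        ((1 * (σ * (K * y + c)) - y * (σ * (K * 1))) / (σ * (K * y + c)) ^ 2))) y := by
    intro y hy
    have hs : HasDerivAt (fun y => σ * (K * y + c)) (σ * (K * 1)) y :=
      (((hasDerivAt_id y).const_mul K).add_const c).const_mul σ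
    have hq := (hasDerivAt_id y).div hs (hpos y hy).ne'
    have hcomp := ((gaussPhi_hasDerivAt (y / (σ * (K * y + c)))).comp y hq).const_mul
      (Real.sqrt (2 * Real.pi))⁻¹
    refine hcomp.congr_of_eventuallyEq ?_
    filter_upwards [Iio_mem_nhds hy] with z hz
    rw [hF z (le_of_lt hz), gaussCDF_eq_gaussPhi _ _ (hpos z hz)]
    rfl
  refine ⟨fun y hy => (hd y hy).differentiableAt.differentiableWithinAt, ?_⟩
  have hlim : Filter.Tendsto (fun y : ℝ => (Real.sqrt (2 * Real.pi))⁻¹ *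
      ((σ * c) / (σ * (K * y + c)) ^ 2)) Filter.atBot (nhds 0) := by
    have h1 : Filter.Tendsto (fun y : ℝ => σ * (K * y + c)) Filter.atBot Filter.atTop :=
      (Filter.tendsto_atTop_add_const_right _ _
        (Filter.tendsto_id.const_mul_atBot_of_neg hK)).const_mul_atTop hσ
    have h2 := (Filter.tendsto_pow_atTop (two_ne_zero)).comp h1
    have h3 := (h2.const_div_atTop (σ * c)).const_mul (Real.sqrt (2 * Real.pi))⁻¹
    simpa using h3
  refine squeeze_zero_norm' ?_ hlim
  filter_upwards [Filter.eventually_lt_atBot (0:ℝ)] with y hy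
  have hp := hpos y hy
  rw [(hd y hy).deriv]
  have e : 1 * (σ * (K * y + c)) - y * (σ * (K * 1)) = σ * c := by ring
  rw [e, Real.norm_of_nonneg (by positivity)]
  have h0 : 0 ≤ (σ * c) / (σ * (K * y + c)) ^ 2 := by positivity
  have h1 : Real.exp (-(1/2) * (y / (σ * (K * y + c))) ^ 2) ≤ 1 := by
    rw [Real.exp_le_one_iff]
    nlinarith [sq_nonneg (y / (σ * (K * y + c)))]
  exact mul_le_mul_of_nonneg_left (mul_le_of_le_one_left h0 h1) (by positivity)
end

section
/- Let c > 0 and K < 0, and define F(y) = G(y, Ky + c) for y ≤ 0 (the random limit normal function with σ = 1 and h(y) = Ky + c). Then F is differentiable on (−∞, 0) and its derivative f(y) = F′(y) is a monotone nondecreasing function of y on (−∞, 0); moreover f(y) > 0 for all y < 0. -/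
open Set MeasureTheory in
theorem gauss_scale (y s : ℝ) (hs : 0 < s) :
    gaussCDF y s = (Real.sqrt (2 * Real.pi))⁻¹ * ∫ x in Iic (y / s), Real.exp (-x ^ 2 / 2) := by
  have key : ∫ x in Iic y, Real.exp (-x ^ 2 / (2 * s ^ 2))
      = s * ∫ x in Iic (y / s), Real.exp (-x ^ 2 / 2) := by
    have h1 := integral_comp_neg_Iic y (fun x : ℝ => Real.exp (-x ^ 2 / (2 * s ^ 2)))
    have h2 := integral_comp_neg_Iic (y / s) (fun x : ℝ => Real.exp (-x ^ 2 / 2))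
    have h3 := integral_comp_mul_left_Ioi (fun x : ℝ => Real.exp (-x ^ 2 / 2)) (-y) (inv_pos.2 hs)
    simp only [neg_sq] at h1 h2
    rw [h1, h2]
    have e1 : ∀ x : ℝ, -(s⁻¹ * x) ^ 2 / 2 = -x ^ 2 / (2 * s ^ 2) := by
      intro x; field_simp
    have e2 : s⁻¹ * -y = -(y / s) := by field_simp
    simp only [e1, e2, inv_inv, smul_eq_mul] at h3
    exact h3
  unfold gaussCDF
  rw [key, Real.sqrt_mul (by positivity), Real.sqrt_sq hs.le]
  field_simp

open Set MeasureTheory in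
theorem gauss_deriv (u : ℝ) :
    HasDerivAt (fun u : ℝ => ∫ x in Iic u, Real.exp (-x ^ 2 / 2)) (Real.exp (-u ^ 2 / 2)) u := by
  have hi : Integrable (fun x : ℝ => Real.exp (-x ^ 2 / 2)) := by
    convert integrable_exp_neg_mul_sq (b := 1 / 2) (by norm_num) using 3
    ring
  have hc : Continuous (fun x : ℝ => Real.exp (-x ^ 2 / 2)) := by fun_prop
  have h : (fun u : ℝ => ∫ x in Iic u, Real.exp (-x ^ 2 / 2)) =
      fun u => (∫ x in Iic 0, Real.exp (-x ^ 2 / 2)) + ∫ x in (0 : ℝ)..u, Real.exp (-x ^ 2 / 2) := by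
    funext v
    rw [← intervalIntegral.integral_Iic_sub_Iic hi.integrableOn hi.integrableOn]
    ring
  rw [h]
  exact (hc.integral_hasStrictDerivAt 0 u).hasDerivAt.const_add _

/-- For `c > 0` and `K < 0`, the random limit normal function `F(y) = G(y, K y + c)`
(with `σ = 1`) is differentiable on `(-∞, 0)`, its derivative is monotone nondecreasing
on `(-∞, 0)`, and the derivative is strictly positive there. -/
theorem random_limit_normal_stmt15
    (c K : ℝ) (hc : 0 < c) (hK : K < 0)
    (F : ℝ → ℝ) (hF : ∀ y ≤ 0, F y = gaussCDF y (K * y + c)) :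
    DifferentiableOn ℝ F (Set.Iio 0) ∧
    MonotoneOn (deriv F) (Set.Iio 0) ∧
    ∀ y < 0, 0 < deriv F y := by
  have hs : ∀ y < 0, 0 < K * y + c := fun y hy => by nlinarith
  have hD : ∀ y < 0, HasDerivAt F ((Real.sqrt (2 * Real.pi))⁻¹ *
      (Real.exp (-(y / (K * y + c)) ^ 2 / 2) * (c / (K * y + c) ^ 2))) y := by
    intro y hy
    have hy' := hs y hy
    have hu : HasDerivAt (fun y => y / (K * y + c)) (c / (K * y + c) ^ 2) y := by
      have hl : HasDerivAt (fun y => K * y + c) K y := by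
        simpa using ((hasDerivAt_id y).const_mul K).add_const c
      have h := (hasDerivAt_id' y).fun_div hl hy'.ne'
      refine h.congr_deriv ?_
      congr 1
      ring
    have h := ((gauss_deriv (y / (K * y + c))).comp y hu).const_mul (Real.sqrt (2 * Real.pi))⁻¹
    refine h.congr_of_eventuallyEq ?_
    filter_upwards [Iio_mem_nhds hy] with z hz
    rw [hF z (le_of_lt hz), gauss_scale z _ (hs z hz)]
    rfl
  refine ⟨fun y hy => (hD y hy).differentiableAt.differentiableWithinAt, ?_, ?_⟩
  · intro y hy z hz hyz
    rw [(hD y hy).deriv, (hD z hz).deriv]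
    have hy' := hs y hy
    have hz' := hs z hz
    have hz0 : z < 0 := hz
    have hle : K * z + c ≤ K * y + c := by nlinarith
    have hu : y / (K * y + c) ≤ z / (K * z + c) := by
      rw [div_le_div_iff₀ hy' hz']
      nlinarith
    have hn : z / (K * z + c) ≤ 0 := (div_neg_of_neg_of_pos hz0 hz').le
    have hsq : (z / (K * z + c)) ^ 2 ≤ (y / (K * y + c)) ^ 2 := by nlinarith
    gcongr
  · intro y hy
    rw [(hD y hy).deriv]
    have hy' := hs y hy
    positivity
end
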